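/- Let λ be a nonzero l-regular partition which is edge l-connected and such that l divides e_l(λ). Let λ̃ be the partition obtained by removing the first column of the Young diagram of λ (so λ̃_i = λ_i − 1 for 1 ≤ i ≤ ℓ(λ)). Then λ̃ is l-regular and ℓ(Mull(λ)) = ℓ(Mull(λ̃)). -/

import Mathlib

noncomputable section

/-- `p : ℕ → ℕ` represents the partition `λ` with `p i = λ_{i+1}` (0-indexed parts):
a weakly decreasing, eventually zero sequence. -/
def IsPartition (p : ℕ → ℕ) : Prop :=
  (∀ i j, i ≤ j → p j ≤ p i) ∧ ∃ N, ∀ i, N ≤ i → p i = 0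

/-- `ℓ(λ)`, the number of nonzero parts. -/
def plen (p : ℕ → ℕ) : ℕ := sInf {N | p N = 0}

/-- the degree (number of boxes) of the partition. -/
def pdeg (p : ℕ → ℕ) : ℕ := ∑ i ∈ Finset.range (plen p), p i

/-- `λ` is `l`-regular: no `l` consecutive parts are equal and nonzero. -/
def IsLRegular (l : ℕ) (p : ℕ → ℕ) : Prop :=
  ∀ i, p i ≠ 0 → p (i + l - 1) ≠ p i

/-- `λ` is `l`-restricted: `λ_i - λ_{i+1} < l` for all `i`. -/
def IsLRestricted (l : ℕ) (p : ℕ → ℕ) : Prop :=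
  ∀ i, p i - p (i + 1) < l

/-- the transpose (conjugate) partition. -/
def conjP (p : ℕ → ℕ) : ℕ → ℕ :=
  fun j => ((Finset.range (plen p)).filter fun i => j < p i).card

/-- the minimal `h ≥ 1` with `λ_1 - λ_{h+1} + h ≥ l`: when `e(λ) > l`, the first
`l`-segment of the `l`-edge lies in rows `1, …, h`. -/
def firstSeg (l : ℕ) (p : ℕ → ℕ) : ℕ := sInf {h | 1 ≤ h ∧ l ≤ p 0 - p h + h}

/-- removal of the `l`-edge (with fuel): if `e(λ) ≤ l` the whole edge is removed,
otherwise the first `l`-segment is removed from rows `1, …, h` (`h = firstSeg`) and one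
recurses on `(λ_{h+1}, λ_{h+2}, …)`. -/
def removeLEdgeAux (l : ℕ) : ℕ → (ℕ → ℕ) → ℕ → ℕ
  | 0, _ => fun _ => 0
  | n + 1, p =>
    if p 0 = 0 then fun _ => 0
    else if p 0 + plen p - 1 ≤ l then fun i => p (i + 1) - 1
    else fun i =>
      if i + 1 < firstSeg l p then p (i + 1) - 1
      else if i + 1 = firstSeg l p then p 0 + firstSeg l p - 1 - l
      else removeLEdgeAux l n (fun j => p (j + firstSeg l p)) (i - firstSeg l p)

/-- the partition obtained by removing the `l`-edge of `λ`. -/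
def removeLEdge (l : ℕ) (p : ℕ → ℕ) : ℕ → ℕ := removeLEdgeAux l (plen p) p

/-- `e_l(λ)`, the number of nodes of the `l`-edge. -/
def elen (l : ℕ) (p : ℕ → ℕ) : ℕ := pdeg p - pdeg (removeLEdge l p)

/-- the length of `Mull(λ)` prescribed by the defining recursion of the Mullineux map. -/
def mullLen (l : ℕ) (p : ℕ → ℕ) : ℕ :=
  if l ∣ elen l p then elen l p - plen p else elen l p - plen p + 1

/-- the Mullineux map (with fuel): `Mull(0) = 0` and, for `λ ≠ 0` `l`-regular with `ν`
obtained from `λ` by removing the `l`-edge, `Mull(λ)` is the unique `l`-regular partition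
whose `l`-edge removal leaves `Mull(ν)` and whose length is `e_l(λ) - ℓ(λ)` if
`l ∣ e_l(λ)` and `e_l(λ) - ℓ(λ) + 1` otherwise. -/
def mullAux (l : ℕ) : ℕ → (ℕ → ℕ) → ℕ → ℕ
  | 0, _ => fun _ => 0
  | n + 1, p =>
    if p 0 = 0 then fun _ => 0
    else
      Classical.epsilon fun μ : ℕ → ℕ =>
        IsPartition μ ∧ IsLRegular l μ ∧
          removeLEdge l μ = mullAux l n (removeLEdge l p) ∧ plen μ = mullLen l p

/-- the Mullineux map. -/
def mull (l : ℕ) (p : ℕ → ℕ) : ℕ → ℕ := mullAux l (pdeg p) p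

/-- the list of Mullineux components (with fuel). -/
def mullCompsAux (l : ℕ) : ℕ → (ℕ → ℕ) → List (ℕ → ℕ)
  | 0, _ => []
  | n + 1, p =>
    if p 0 = 0 then []
    else if elen l p ≤ l then [p]
    else (fun i => if i < firstSeg l p then p i else 0) ::
      mullCompsAux l n (fun j => p (j + firstSeg l p))

/-- the Mullineux components of `λ`. -/
def mullComps (l : ℕ) (p : ℕ → ℕ) : List (ℕ → ℕ) := mullCompsAux l (plen p) p

/-- edge `l`-connectedness (with fuel): consecutive Mullineux components `α, ρ` satisfy
`α_1 - ρ_1 + ℓ(α) = l`. -/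
def edgeConnAux (l : ℕ) : ℕ → (ℕ → ℕ) → Prop
  | 0, _ => True
  | n + 1, p =>
    if elen l p ≤ l then True
    else p 0 + firstSeg l p = l + p (firstSeg l p) ∧
      edgeConnAux l n fun j => p (j + firstSeg l p)

/-- `λ` is edge `l`-connected. -/
def EdgeLConnected (l : ℕ) (p : ℕ → ℕ) : Prop := edgeConnAux l (plen p) p

/-- the node `(i+1, λ_{i+1})` (in row `i+1`, 1-indexed) is a removable node. -/
def Removable (p : ℕ → ℕ) (i : ℕ) : Prop := p (i + 1) < p i

/-- removal of the removable node in row `i+1`. -/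
def removeNode (p : ℕ → ℕ) (i : ℕ) : ℕ → ℕ := fun k => if k = i then p i - 1 else p k

/-- there is an addable node `(i+1, λ_{i+1} + 1)` in row `i+1` (1-indexed). -/
def Addable (p : ℕ → ℕ) (i : ℕ) : Prop := i ≤ plen p ∧ (i = 0 ∨ p i < p (i - 1))

/-- the removable node in row `i+1` is suitable: its residue (mod `l`) differs from the
residue of every lower addable node. -/
def Suitable (l : ℕ) (p : ℕ → ℕ) (i : ℕ) : Prop :=
  Removable p i ∧ ∀ j, i < j → Addable p j →
    ¬ ((p j : ℤ) - (j : ℤ) ≡ (p i : ℤ) - (i : ℤ) - 1 [ZMOD (l : ℤ)])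

/-- the removable node in row `i+1` is co-suitable: its transpose node is a suitable
node of the transpose partition. -/
def CoSuitable (l : ℕ) (p : ℕ → ℕ) (i : ℕ) : Prop :=
  Removable p i ∧ Suitable l (conjP p) (p i - 1)

/-- `Φ_m`: partitions with at most `m` parts and `λ_1 - λ_m ≤ l - m`. -/
def Phi (l m : ℕ) : Set (ℕ → ℕ) :=
  {p | IsPartition p ∧ plen p ≤ m ∧ p 0 - p (m - 1) ≤ l - m}

/-- `λ` is `m`-distinguished: `λ = λ⁰ + lλ̄` with
`λ⁰ = ((l-m)^k, a_1, …, a_m)`, `l - m > a_1 ≥ … ≥ a_m ≥ 0`, and `λ̄` a partition with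
`λ̄_1 ≤ m - 1`. -/
def IsDistinguished (l m : ℕ) (p : ℕ → ℕ) : Prop :=
  ∃ (k : ℕ) (a : ℕ → ℕ) (pb : ℕ → ℕ),
    IsPartition pb ∧ pb 0 < m ∧
    (∀ i j, i ≤ j → a j ≤ a i) ∧ a 0 < l - m ∧ (∀ i, m ≤ i → a i = 0) ∧
    ∀ i, p i = (if i < k then l - m else a (i - k)) + l * pb i

/-- `q` is obtained from `p` by removing a skew `l`-hook (spanning rows `a+1, …, b+1`,
1-indexed). -/
def IsHookRemoval (l : ℕ) (p q : ℕ → ℕ) : Prop :=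
  IsPartition q ∧ ∃ a b : ℕ, a ≤ b ∧
    (∀ i, i < a → q i = p i) ∧
    (∀ i, a ≤ i → i < b → q i + 1 = p (i + 1)) ∧
    q b + l = p a + (b - a) ∧
    ∀ i, b < i → q i = p i

/-- `q` is the `l`-core of `p`: obtained by repeatedly removing skew `l`-hooks until
none remain. -/
def IsCoreOf (l : ℕ) (p q : ℕ → ℕ) : Prop :=
  Relation.ReflTransGen (fun x y => IsHookRemoval l x y) p q ∧ ∀ r, ¬ IsHookRemoval l q r

/-- the `l`-core of `p`. -/
def lCore (l : ℕ) (p : ℕ → ℕ) : ℕ → ℕ := Classical.epsilon (IsCoreOf l p)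


/-! ### Basic facts on partitions -/

/-- drop the first `k` parts -/
abbrev shiftP (k : ℕ) (p : ℕ → ℕ) : ℕ → ℕ := fun j => p (j + k)

lemma ple_iff {p : ℕ → ℕ} (hp : IsPartition p) (i : ℕ) : plen p ≤ i ↔ p i = 0 := by
  have hne : {N | p N = 0}.Nonempty := by
    obtain ⟨N, hN⟩ := hp.2
    exact ⟨N, hN N le_rfl⟩
  constructor
  · intro h
    have h1 : p (plen p) = 0 := Nat.sInf_mem hne
    have := hp.1 _ _ h
    omega
  · intro h
    exact Nat.sInf_le h

lemma plen_eq {p : ℕ → ℕ} (hp : IsPartition p) {n : ℕ} (h : ∀ i, p i = 0 ↔ n ≤ i) :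
    plen p = n := by
  apply le_antisymm
  · rw [ple_iff hp, h]
  · rw [← h, ← ple_iff hp]

lemma isP_shift {p : ℕ → ℕ} (hp : IsPartition p) (k : ℕ) : IsPartition (shiftP k p) := by
  refine ⟨fun i j h => hp.1 _ _ (by omega), ?_⟩
  obtain ⟨N, hN⟩ := hp.2
  exact ⟨N, fun i h => hN _ (by omega)⟩

lemma plen_shift {p : ℕ → ℕ} (hp : IsPartition p) (k : ℕ) :
    plen (shiftP k p) = plen p - k := by
  apply plen_eq (isP_shift hp k)
  intro i
  show p (i + k) = 0 ↔ _
  rw [← ple_iff hp]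
  omega

lemma plen_mono {p q : ℕ → ℕ} (hp : IsPartition p) (hq : IsPartition q) (h : ∀ i, p i ≤ q i) :
    plen p ≤ plen q := by
  rw [ple_iff hp]
  have := (ple_iff hq (plen q)).1 le_rfl
  have := h (plen q)
  omega

lemma fs_spec (l : ℕ) (hl : 2 ≤ l) (p : ℕ → ℕ) :
    1 ≤ firstSeg l p ∧ l ≤ p 0 - p (firstSeg l p) + firstSeg l p := by
  have hne : {h | 1 ≤ h ∧ l ≤ p 0 - p h + h}.Nonempty := ⟨l, by omega, by omega⟩
  exact Nat.sInf_mem hne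

lemma fs_le (l : ℕ) (p : ℕ → ℕ) (k : ℕ) (h1 : 1 ≤ k) (h2 : l ≤ p 0 - p k + k) :
    firstSeg l p ≤ k := Nat.sInf_le ⟨h1, h2⟩

lemma fs_lt (l : ℕ) (p : ℕ → ℕ) (k : ℕ) (h1 : 1 ≤ k) (h2 : k < firstSeg l p) :
    p 0 - p k + k < l := by
  by_contra h
  have := fs_le l p k h1 (by omega)
  omega

lemma fs_le_l (l : ℕ) (hl : 2 ≤ l) (p : ℕ → ℕ) : firstSeg l p ≤ l :=
  fs_le l p l (by omega) (by omega)

lemma fs_eq (l : ℕ) (hl : 2 ≤ l) (p : ℕ → ℕ) (k : ℕ) (h1 : 1 ≤ k) (h2 : l ≤ p 0 - p k + k)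
    (h3 : ∀ j, 1 ≤ j → j < k → p 0 - p j + j < l) : firstSeg l p = k := by
  apply le_antisymm (fs_le l p k h1 h2)
  by_contra h
  have a := fs_spec l hl p
  have := h3 _ a.1 (by omega)
  omega

/-- in the full case the first segment lies in the nonzero rows -/
lemma fs_le_plen (l : ℕ) (hl : 2 ≤ l) {p : ℕ → ℕ} (hp : IsPartition p) (hf : l < p 0 + plen p) :
    firstSeg l p ≤ plen p := by
  have h0 := (ple_iff hp (plen p)).1 le_rfl
  have h1 := ple_iff hp 0
  apply fs_le
  · omega
  · omega

lemma fs_partial (l : ℕ) (hl : 2 ≤ l) {p : ℕ → ℕ} (hp : IsPartition p) (hf : p 0 + plen p ≤ l) :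
    firstSeg l p = l - p 0 ∧ plen p ≤ l - p 0 := by
  refine ⟨?_, by omega⟩
  have h1 := ple_iff hp 0
  have h2 := (ple_iff hp (l - p 0)).1 (by omega)
  apply fs_eq l hl
  · omega
  · omega
  · intro j hj hj2
    by_cases h : plen p ≤ j
    · have := (ple_iff hp j).1 h
      omega
    · have := mt (ple_iff hp j).2 h
      have := hp.1 0 j (by omega)
      omega

lemma rem_fuel (l : ℕ) (hl : 2 ≤ l) : ∀ (n : ℕ) (p : ℕ → ℕ), IsPartition p → plen p ≤ n →
    removeLEdgeAux l n p = removeLEdge l p := by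
  have key : ∀ (n m : ℕ) (p : ℕ → ℕ), IsPartition p → plen p ≤ n → plen p ≤ m →
      removeLEdgeAux l n p = removeLEdgeAux l m p := by
    intro n
    induction n with
    | zero =>
      intro m p hp hn hm
      have h0 := (ple_iff hp 0).1 (by omega)
      cases m with
      | zero => rfl
      | succ m => simp [removeLEdgeAux, h0]
    | succ n ih =>
      intro m p hp hn hm
      cases m with
      | zero =>
        have h0 := (ple_iff hp 0).1 (by omega)
        simp [removeLEdgeAux, h0]
      | succ m =>
        have hs := plen_shift hp (firstSeg l p)
        have := fs_spec l hl p
        have h := ih m (shiftP (firstSeg l p) p) (isP_shift hp _) (by omega) (by omega)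
        unfold removeLEdgeAux
        rw [h]
  intro n p hp hn
  exact key _ _ p hp hn le_rfl

lemma rem_zero (l : ℕ) {p : ℕ → ℕ} (hp : IsPartition p) (h : p 0 = 0) (i : ℕ) :
    removeLEdge l p i = 0 := by
  have : plen p = 0 := by have := (ple_iff hp 0).2 h; omega
  simp [removeLEdge, this, removeLEdgeAux]

lemma rem_partial (l : ℕ) (hl : 2 ≤ l) {p : ℕ → ℕ} (hp : IsPartition p)
    (hf : p 0 + plen p ≤ l) (i : ℕ) : removeLEdge l p i = p (i + 1) - 1 := by
  by_cases h : p 0 = 0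
  · rw [rem_zero l hp h]
    have := hp.1 0 (i + 1) (by omega)
    omega
  · rw [← rem_fuel l hl (plen p + 1) p hp (by omega)]
    unfold removeLEdgeAux
    rw [if_neg h, if_pos (by omega)]

lemma rem_full (l : ℕ) (hl : 2 ≤ l) {p : ℕ → ℕ} (hp : IsPartition p)
    (hf : l < p 0 + plen p) (i : ℕ) : removeLEdge l p i =
      if i + 1 < firstSeg l p then p (i + 1) - 1
      else if i + 1 = firstSeg l p then p 0 + firstSeg l p - 1 - l
      else removeLEdge l (shiftP (firstSeg l p) p) (i - firstSeg l p) := by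
  have h0 : p 0 ≠ 0 := by
    intro h
    have := (ple_iff hp 0).2 h
    omega
  have hs := plen_shift hp (firstSeg l p)
  have hsp := fs_spec l hl p
  by_cases he : p 0 + plen p = l + 1
  · have hfs : firstSeg l p = plen p := by
      have h1 := ple_iff hp 0
      have h2 := (ple_iff hp (plen p)).1 le_rfl
      apply fs_eq l hl
      · omega
      · omega
      · intro j hj hj2
        have := mt (ple_iff hp j).2 (by omega)
        have := hp.1 0 j (by omega)
        omega
    have e1 : removeLEdge l p i = p (i + 1) - 1 := by
      rw [← rem_fuel l hl (plen p + 1) p hp (by omega)]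
      unfold removeLEdgeAux
      rw [if_neg h0, if_pos (by omega)]
    rw [e1]
    have hq : removeLEdge l (shiftP (firstSeg l p) p) (i - firstSeg l p) = 0 := by
      apply rem_zero l (isP_shift hp _)
      show p (0 + firstSeg l p) = 0
      rw [← ple_iff hp]
      omega
    rw [hq]
    have := ple_iff hp (i + 1)
    split_ifs <;> omega
  · rw [← rem_fuel l hl (plen p + 1) p hp (by omega)]
    rw [← rem_fuel l hl (plen p) (shiftP (firstSeg l p) p) (isP_shift hp _) (by omega)]
    conv_lhs => unfold removeLEdgeAux
    rw [if_neg h0, if_neg (by omega)]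

lemma rem_full1 (l : ℕ) (hl : 2 ≤ l) {p : ℕ → ℕ} (hp : IsPartition p)
    (hf : l < p 0 + plen p) (i : ℕ) (h : i + 1 < firstSeg l p) :
    removeLEdge l p i = p (i + 1) - 1 := by
  rw [rem_full l hl hp hf, if_pos h]

lemma rem_full2 (l : ℕ) (hl : 2 ≤ l) {p : ℕ → ℕ} (hp : IsPartition p)
    (hf : l < p 0 + plen p) (i : ℕ) (h : i + 1 = firstSeg l p) :
    removeLEdge l p i + l = p 0 + i ∧ p (i + 1) ≤ removeLEdge l p i + 1 := by
  have e : removeLEdge l p i = p 0 + firstSeg l p - 1 - l := by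
    rw [rem_full l hl hp hf, if_neg (by omega), if_pos h]
  have h1 := fs_spec l hl p
  have h2 := fs_le_plen l hl hp hf
  have h3 := ple_iff hp (firstSeg l p)
  have h4 := hp.1 0 (firstSeg l p) (by omega)
  rw [e, h]
  omega

lemma rem_full3 (l : ℕ) (hl : 2 ≤ l) {p : ℕ → ℕ} (hp : IsPartition p)
    (hf : l < p 0 + plen p) (i : ℕ) :
    removeLEdge l p (i + firstSeg l p) = removeLEdge l (shiftP (firstSeg l p) p) i := by
  rw [rem_full l hl hp hf, if_neg (by omega), if_neg (by omega)]
  congr 1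
  omega

/-- induction along the segments -/
lemma seg_ind (l : ℕ) (hl : 2 ≤ l) (P : (ℕ → ℕ) → Prop)
    (h1 : ∀ p, IsPartition p → p 0 + plen p ≤ l → P p)
    (h2 : ∀ p, IsPartition p → l < p 0 + plen p → P (shiftP (firstSeg l p) p) → P p) :
    ∀ p, IsPartition p → P p := by
  have key : ∀ n p, IsPartition p → plen p ≤ n → P p := by
    intro n
    induction n with
    | zero =>
      intro p hp hn
      have := (ple_iff hp 0).1 (by omega)
      exact h1 p hp (by omega)
    | succ n ih =>
      intro p hp hn
      by_cases hf : l < p 0 + plen p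
      · apply h2 p hp hf
        apply ih _ (isP_shift hp _)
        have hs := plen_shift hp (firstSeg l p)
        have := fs_spec l hl p
        omega
      · exact h1 p hp (by omega)
  exact fun p hp => key _ p hp le_rfl

lemma rem_bounds (l : ℕ) (hl : 2 ≤ l) (p : ℕ → ℕ) (hp : IsPartition p) :
    ∀ i, removeLEdge l p i ≤ p i - 1 ∧ p (i + 1) ≤ removeLEdge l p i + 1 := by
  revert p
  apply seg_ind l hl
  · intro p hp hf i
    rw [rem_partial l hl hp hf]
    have := hp.1 i (i + 1) (by omega)
    omega
  · intro p hp hf ih i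
    have hs := fs_spec l hl p
    rcases lt_trichotomy (i + 1) (firstSeg l p) with h | h | h
    · rw [rem_full1 l hl hp hf i h]
      have := hp.1 i (i + 1) (by omega)
      omega
    · obtain ⟨a, b⟩ := rem_full2 l hl hp hf i h
      refine ⟨?_, b⟩
      by_cases h0 : i = 0
      · subst h0
        omega
      · have := fs_lt l p i (by omega) (by omega)
        have := hp.1 0 i (by omega)
        omega
    · obtain ⟨j, rfl⟩ : ∃ j, i = j + firstSeg l p := ⟨i - firstSeg l p, by omega⟩
      rw [rem_full3 l hl hp hf]
      have := ih j
      rw [show j + firstSeg l p + 1 = j + 1 + firstSeg l p by ring]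
      exact this

lemma rem_isP (l : ℕ) (hl : 2 ≤ l) (p : ℕ → ℕ) (hp : IsPartition p) :
    IsPartition (removeLEdge l p) := by
  constructor
  · intro i j hij
    apply antitone_nat_of_succ_le (f := removeLEdge l p) _ hij
    intro n
    have h1 := (rem_bounds l hl p hp n).2
    have h2 := (rem_bounds l hl p hp (n + 1)).1
    omega
  · obtain ⟨N, hN⟩ := hp.2
    refine ⟨N, fun i hi => ?_⟩
    have := (rem_bounds l hl p hp i).1
    have := hN i hi
    omega

lemma rem_top (l : ℕ) (hl : 2 ≤ l) (q : ℕ → ℕ) (hq : IsPartition q) (m : ℕ) (hm : m + 2 ≤ l)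
    (h0 : removeLEdge l q m ≠ 0) (h : removeLEdge l q m = q 0 - 1) : q (m + 1) = q 0 := by
  by_cases hf : l < q 0 + plen q
  · have hs := fs_spec l hl q
    have hb := hq.1 0 (m + 1) (by omega)
    by_cases h1 : m + 1 < firstSeg l q
    · rw [rem_full1 l hl hq hf m h1] at h h0
      omega
    · have a := (rem_full2 l hl hq hf (firstSeg l q - 1) (by omega)).1
      have := (rem_isP l hl q hq).1 (firstSeg l q - 1) m (by omega)
      omega
  · have hb := hq.1 0 (m + 1) (by omega)
    rw [rem_partial l hl hq (by omega)] at h h0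
    omega

lemma reg_shift {l : ℕ} {p : ℕ → ℕ} (h : IsLRegular l p) (hl : 2 ≤ l) (k : ℕ) :
    IsLRegular l (shiftP k p) := by
  intro i hi
  have := h (i + k) hi
  rw [show i + k + l - 1 = i + l - 1 + k by omega] at this
  exact this

lemma rem_reg (l : ℕ) (hl : 2 ≤ l) (p : ℕ → ℕ) (hp : IsPartition p) :
    IsLRegular l p → IsLRegular l (removeLEdge l p) := by
  revert p
  apply seg_ind l hl
  · intro p hp hf hr i hi h
    rw [rem_partial l hl hp hf] at hi h
    rw [rem_partial l hl hp hf] at h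
    have := hr (i + 1) (by omega)
    rw [show i + 1 + l - 1 = i + l - 1 + 1 by omega] at this
    omega
  · intro p hp hf ih hr i hi h
    have hq := isP_shift hp (firstSeg l p)
    have ih' := ih (reg_shift hr hl _)
    have hs := fs_spec l hl p
    have hsl := fs_le_l l hl p
    have hnP := rem_isP l hl p hp
    generalize hh : firstSeg l p = h' at *
    by_cases hi2 : h' ≤ i
    · obtain ⟨j, rfl⟩ : ∃ j, i = j + h' := ⟨i - h', by omega⟩
      have e1 := rem_full3 l hl hp hf j
      have e2 := rem_full3 l hl hp hf (j + l - 1)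
      rw [hh] at e1 e2
      have := ih' j (by omega)
      rw [show j + l - 1 + h' = j + h' + l - 1 by omega] at e2
      omega
    · have hall : ∀ k, i ≤ k → k ≤ i + l - 1 → removeLEdge l p k = removeLEdge l p i := by
        intro k h1 h2
        have := hnP.1 i k h1
        have := hnP.1 k (i + l - 1) h2
        omega
      obtain ⟨a, b⟩ := rem_full2 l hl hp hf (h' - 1) (by omega)
      have c := hall (h' - 1) (by omega) (by omega)
      rw [show h' - 1 + 1 = h' by omega] at b
      have low : h' ≤ i + l - 1 → p h' = removeLEdge l p i + 1 ∧ p (i + l) = p h' := by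
        intro h3
        have e1 := rem_full3 l hl hp hf 0
        have e2 := rem_full3 l hl hp hf (i + l - 1 - h')
        rw [hh] at e1 e2
        have f1 := (rem_bounds l hl _ hq 0).1
        have g1 := hall (0 + h') (by omega) (by omega)
        have g2 := hall (i + l - 1 - h' + h') (by omega) (by omega)
        have f3 : shiftP h' p 0 = p h' := by simp [shiftP]
        have ht := rem_top l hl _ hq (i + l - 1 - h') (by omega) (by omega) (by omega)
        have f4 : shiftP h' p (i + l - 1 - h' + 1) = p (i + l) := by
          simp only [shiftP]
          congr 1
          omega
        omega
      by_cases hi3 : i + 1 = h'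
      · have := low (by omega)
        have h5 := hr h' (by omega)
        have : h' + l - 1 = i + l := by omega
        rw [this] at h5
        omega
      · have d := rem_full1 l hl hp hf i (by omega)
        have d2 := rem_full1 l hl hp hf (h' - 2) (by omega)
        have d3 := hall (h' - 2) (by omega) (by omega)
        rw [show h' - 2 + 1 = h' - 1 by omega] at d2
        by_cases h3 : h' ≤ i + l - 1
        · have := low h3
          have h5 := hr (i + 1) (by omega)
          rw [show i + 1 + l - 1 = i + l by omega] at h5
          omega
        · have h5 := hr 0 (by omega)
          have : i = 0 := by omega
          subst this
          rw [show 0 + l - 1 = h' - 1 by omega] at h5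
          have := hp.1 0 (h' - 1) (by omega)
          omega

/-! ### Length of the image: the chain description -/

/-- the chain statistic: after `n` steps of the greedy chain -/
def chainS (l : ℕ) : ℕ → (ℕ → ℕ) → ℕ
  | 0, p => p 0
  | n + 1, p => (l - firstSeg l p) + chainS l n (shiftP (firstSeg l p) p)

lemma chainS_partial (l : ℕ) (hl : 2 ≤ l) : ∀ (n : ℕ) (p : ℕ → ℕ), IsPartition p →
    p 0 + plen p ≤ l → chainS l n p = p 0 := by
  intro n
  induction n with
  | zero => intro p _ _; rfl
  | succ n ih =>
    intro p hp hf
    obtain ⟨h1, h2⟩ := fs_partial l hl hp hf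
    have hq := isP_shift hp (firstSeg l p)
    have hs := plen_shift hp (firstSeg l p)
    have h0 : shiftP (firstSeg l p) p 0 = 0 := by
      rw [← ple_iff hq]
      omega
    simp only [chainS]
    rw [ih _ hq (by omega), h0]
    omega

lemma pdeg_eq {p : ℕ → ℕ} (hp : IsPartition p) (n : ℕ) (hn : plen p ≤ n) :
    pdeg p = ∑ i ∈ Finset.range n, p i := by
  unfold pdeg
  apply Finset.sum_subset
  · intro x hx
    simp at *
    omega
  · intro x _ hx
    simp at hx
    exact (ple_iff hp x).1 hx

lemma pdeg_le {p q : ℕ → ℕ} (hp : IsPartition p) (hq : IsPartition q) (h : ∀ i, p i ≤ q i) :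
    pdeg p ≤ pdeg q := by
  rw [pdeg_eq hp _ (plen_mono hp hq h), pdeg_eq hq _ le_rfl]
  exact Finset.sum_le_sum fun i _ => h i

lemma pdeg_rem_le (l : ℕ) (hl : 2 ≤ l) (p : ℕ → ℕ) (hp : IsPartition p) :
    pdeg (removeLEdge l p) ≤ pdeg p := by
  apply pdeg_le (rem_isP l hl p hp) hp
  intro i
  have := (rem_bounds l hl p hp i).1
  omega

lemma sum_pred (f : ℕ → ℕ) (n : ℕ) (h : ∀ i, i < n → f i ≠ 0) :
    ∑ i ∈ Finset.range n, (f i - 1) + n = ∑ i ∈ Finset.range n, f i := by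
  induction n with
  | zero => simp
  | succ n ih =>
    rw [Finset.sum_range_succ, Finset.sum_range_succ]
    have := ih fun i hi => h i (by omega)
    have := h n (by omega)
    omega

lemma elen_zero (l : ℕ) {p : ℕ → ℕ} (hp : IsPartition p) (h : p 0 = 0) : elen l p = 0 := by
  have : plen p = 0 := by have := (ple_iff hp 0).2 h; omega
  simp [elen, pdeg, this]

lemma elen_partial (l : ℕ) (hl : 2 ≤ l) {p : ℕ → ℕ} (hp : IsPartition p)
    (hf : p 0 + plen p ≤ l) (h0 : p 0 ≠ 0) : elen l p = p 0 + plen p - 1 := by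
  have h1 := ple_iff hp 0
  obtain ⟨m, hm⟩ : ∃ m, plen p = m + 1 := ⟨plen p - 1, by omega⟩
  have hr := rem_isP l hl p hp
  have e1 : pdeg (removeLEdge l p) = ∑ i ∈ Finset.range m, (p (i + 1) - 1) := by
    rw [pdeg_eq hr m]
    · exact Finset.sum_congr rfl fun i _ => rem_partial l hl hp hf i
    · rw [ple_iff hr, rem_partial l hl hp hf, (ple_iff hp (m + 1)).1 (by omega)]
  have e2 : pdeg p = (∑ i ∈ Finset.range m, p (i + 1)) + p 0 := by
    rw [pdeg_eq hp (m + 1) (by omega), Finset.sum_range_succ']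
  have e3 := sum_pred (fun i => p (i + 1)) m (fun i hi => mt (ple_iff hp (i + 1)).2 (by omega))
  unfold elen
  omega

lemma elen_full (l : ℕ) (hl : 2 ≤ l) {p : ℕ → ℕ} (hp : IsPartition p)
    (hf : l < p 0 + plen p) : elen l p = l + elen l (shiftP (firstSeg l p) p) := by
  have hs := fs_spec l hl p
  have hsp := fs_le_plen l hl hp hf
  have hq := isP_shift hp (firstSeg l p)
  have hql := plen_shift hp (firstSeg l p)
  have hr := rem_isP l hl p hp
  have hrq := rem_isP l hl _ hq
  have hrl := plen_mono hr hp (fun i => by have := (rem_bounds l hl p hp i).1; omega)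
  have hrql := plen_mono hrq hq (fun i => by have := (rem_bounds l hl _ hq i).1; omega)
  have r1 := fun i h => rem_full1 l hl hp hf i h
  have r2 := fun i h => (rem_full2 l hl hp hf i h).1
  have r3 := rem_full3 l hl hp hf
  have hle := pdeg_rem_le l hl _ hq
  generalize firstSeg l p = g at *
  obtain ⟨m, rfl⟩ : ∃ m, g = m + 1 := ⟨g - 1, by omega⟩
  obtain ⟨k, hk⟩ : ∃ k, plen p = m + 1 + k := ⟨plen p - (m + 1), by omega⟩
  have e1 : pdeg (removeLEdge l p) = ∑ i ∈ Finset.range m, (p (i + 1) - 1) + removeLEdge l p m +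
      pdeg (removeLEdge l (shiftP (m + 1) p)) := by
    rw [pdeg_eq hr (m + 1 + k) (by omega), Finset.sum_range_add, Finset.sum_range_succ,
      pdeg_eq hrq k (by omega)]
    congr 1
    · congr 1
      apply Finset.sum_congr rfl
      intro i hi
      simp at hi
      exact r1 i (by omega)
    · apply Finset.sum_congr rfl
      intro i _
      rw [← r3, add_comm]
  have e2 : pdeg p = (∑ i ∈ Finset.range m, p (i + 1)) + p 0 + pdeg (shiftP (m + 1) p) := by
    rw [pdeg_eq hp (m + 1 + k) (by omega), Finset.sum_range_add, Finset.sum_range_succ',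
      pdeg_eq hq k (by omega)]
    congr 1
    apply Finset.sum_congr rfl
    intro i _
    simp only [shiftP]
    rw [add_comm]
  have e3 := sum_pred (fun i => p (i + 1)) m (fun i hi => mt (ple_iff hp (i + 1)).2 (by omega))
  have e4 := r2 m rfl
  unfold elen
  omega

lemma elen_ge (l : ℕ) (hl : 2 ≤ l) (p : ℕ → ℕ) (hp : IsPartition p) : plen p ≤ elen l p := by
  revert p
  apply seg_ind l hl
  · intro p hp hf
    by_cases h0 : p 0 = 0
    · have := (ple_iff hp 0).2 h0
      omega
    · rw [elen_partial l hl hp hf h0]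
      omega
  · intro p hp hf ih
    rw [elen_full l hl hp hf]
    have := fs_le_l l hl p
    have := plen_shift hp (firstSeg l p)
    omega

lemma mullLen_chain (l : ℕ) (hl : 2 ≤ l) : ∀ (n : ℕ) (p : ℕ → ℕ), IsPartition p → plen p ≤ n →
    mullLen l p = chainS l n p := by
  intro n
  induction n with
  | zero =>
    intro p hp hn
    have h0 := (ple_iff hp 0).1 (by omega)
    simp [mullLen, chainS, elen_zero l hp h0, h0]
  | succ n ih =>
    intro p hp hn
    by_cases hf : l < p 0 + plen p
    · have hq := isP_shift hp (firstSeg l p)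
      have hql := plen_shift hp (firstSeg l p)
      have hs := fs_spec l hl p
      have hsp := fs_le_plen l hl hp hf
      have hsl := fs_le_l l hl p
      have h := ih _ hq (by omega)
      simp only [chainS]
      rw [← h]
      have he := elen_full l hl hp hf
      have hg := elen_ge l hl _ hq
      unfold mullLen
      have hd : l ∣ elen l p ↔ l ∣ elen l (shiftP (firstSeg l p) p) := by
        rw [he]
        simp
      by_cases hd2 : l ∣ elen l (shiftP (firstSeg l p) p)
      · rw [if_pos hd2, if_pos (hd.2 hd2)]
        omega
      · rw [if_neg hd2, if_neg (mt hd.1 hd2)]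
        omega
    · rw [chainS_partial l hl _ p hp (by omega)]
      by_cases h0 : p 0 = 0
      · have := (ple_iff hp 0).2 h0
        simp [mullLen, elen_zero l hp h0, h0]
      · have := ple_iff hp 0
        have he := elen_partial l hl hp (by omega) h0
        unfold mullLen
        rw [if_neg]
        · omega
        · intro hd
          have := Nat.le_of_dvd (by omega) hd
          omega

lemma mullLen_pos (l : ℕ) (hl : 2 ≤ l) (p : ℕ → ℕ) (hp : IsPartition p) (h0 : p 0 ≠ 0)
    (hr : IsLRegular l p) : 1 ≤ mullLen l p := by
  have h1 := ple_iff hp 0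
  rw [mullLen_chain l hl (plen p) p hp le_rfl]
  by_cases hf : l < p 0 + plen p
  · obtain ⟨m, hm⟩ : ∃ m, plen p = m + 1 := ⟨plen p - 1, by omega⟩
    rw [hm]
    simp only [chainS]
    have hsl := fs_le_l l hl p
    by_cases h : firstSeg l p = l
    · exfalso
      have h2 := fs_lt l p (l - 1) (by omega) (by omega)
      have h3 := hr 0 h0
      rw [show 0 + l - 1 = l - 1 by omega] at h3
      have := hp.1 0 (l - 1) (by omega)
      omega
    · omega
  · rw [chainS_partial l hl _ p hp (by omega)]
    omega

lemma rem_row (l : ℕ) (hl : 2 ≤ l) (q : ℕ → ℕ) (hq : IsPartition q) :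
    ∃ B, removeLEdge l q B + l = q 0 + B := by
  by_cases hf : l < q 0 + plen q
  · have := fs_spec l hl q
    exact ⟨firstSeg l q - 1, (rem_full2 l hl hq hf _ (by omega)).1⟩
  · refine ⟨l - q 0, ?_⟩
    rw [rem_partial l hl hq (by omega), (ple_iff hq _).1 (by omega)]
    omega

lemma chain_compare (l : ℕ) (hl : 2 ≤ l) : ∀ (n : ℕ) (p : ℕ → ℕ) (k : ℕ), IsPartition p →
    p 0 + k ≤ removeLEdge l p k + l →
    chainS l n (shiftP k (removeLEdge l p)) ≤ chainS l n p + k ∧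
    chainS l n p + k ≤ chainS l n (shiftP k (removeLEdge l p)) + l := by
  intro n
  induction n with
  | zero =>
    intro p k hp hk
    have h1 := (rem_bounds l hl p hp k).1
    have h2 := hp.1 0 k (by omega)
    simp only [chainS, shiftP, zero_add]
    omega
  | succ n ih =>
    intro p k hp hk
    have hr := rem_isP l hl p hp
    have hrl := plen_mono hr hp (fun i => by have := (rem_bounds l hl p hp i).1; omega)
    have h1 := (rem_bounds l hl p hp k).1
    have h2 := hp.1 0 k (by omega)
    have hkP := isP_shift hr k
    have hkl := plen_shift hr k
    have hk0 : shiftP k (removeLEdge l p) 0 = removeLEdge l p k := by simp [shiftP]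
    by_cases hf : l < p 0 + plen p
    · have hs := fs_spec l hl p
      have hq := isP_shift hp (firstSeg l p)
      have hp0 := ple_iff hp 0
      have hsl := fs_le_l l hl p
      have hsl' := fs_le_l l hl (shiftP k (removeLEdge l p))
      have hs' := fs_spec l hl (shiftP k (removeLEdge l p))
      have hmin := fs_le l (shiftP k (removeLEdge l p))
      have hlt := fs_lt l (shiftP k (removeLEdge l p))
      have r2 := (rem_full2 l hl hp hf (firstSeg l p - 1) (by omega)).1
      have r3 := rem_full3 l hl hp hf
      obtain ⟨B, hB⟩ := rem_row l hl _ hq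
      have hph := hp.1 0 (firstSeg l p) (by omega)
      have hq0 : shiftP (firstSeg l p) p 0 = p (firstSeg l p) := by simp [shiftP]
      simp only [chainS]
      generalize hh' : firstSeg l (shiftP k (removeLEdge l p)) = h' at *
      generalize hh : firstSeg l p = h at *
      have hkh : k + 1 ≤ h := by
        by_contra hc
        have := hr.1 (h - 1) k (by omega)
        omega
      have hlow : h ≤ k + h' := by
        by_contra hc
        have a : shiftP k (removeLEdge l p) h' = removeLEdge l p (k + h') := by
          simp only [shiftP]; rw [add_comm]
        have := hr.1 (k + h') (h - 1) (by omega)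
        have := hr.1 k (k + h') (by omega)
        omega
      obtain ⟨k', hk'⟩ : ∃ k', k + h' = k' + h := ⟨k + h' - h, by omega⟩
      have hB' := r3 B
      have hup : k' ≤ B := by
        have a : shiftP k (removeLEdge l p) (B + h - k) = removeLEdge l p (B + h) := by
          simp only [shiftP]; congr 1; omega
        have := hr.1 k (B + h) (by omega)
        have := hmin (B + h - k) (by omega) (by omega)
        omega
      have := (rem_isP l hl _ hq).1 k' B hup
      have hI := ih (shiftP h p) k' hq (by omega)
      have e : shiftP h' (shiftP k (removeLEdge l p)) =
          shiftP k' (removeLEdge l (shiftP h p)) := by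
        funext j
        simp only [shiftP]
        have := r3 (j + k')
        rw [← this]
        congr 1
        omega
      rw [e]
      omega
    · rw [chainS_partial l hl _ p hp (by omega), chainS_partial l hl _ _ hkP (by omega)]
      omega

lemma mullLen_compare (l : ℕ) (hl : 2 ≤ l) (p : ℕ → ℕ) (hp : IsPartition p) :
    mullLen l (removeLEdge l p) ≤ mullLen l p ∧
    mullLen l p ≤ mullLen l (removeLEdge l p) + l := by
  have hr := rem_isP l hl p hp
  rw [mullLen_chain l hl (plen p + plen (removeLEdge l p)) p hp (by omega),
    mullLen_chain l hl (plen p + plen (removeLEdge l p)) _ hr (by omega)]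
  have h : p 0 ≤ removeLEdge l p 0 + l := by
    obtain ⟨B, hB⟩ := rem_row l hl p hp
    have hs := fs_spec l hl p
    by_cases hf : l < p 0 + plen p
    · have := (rem_full2 l hl hp hf (firstSeg l p - 1) (by omega)).1
      have := hr.1 0 (firstSeg l p - 1) (by omega)
      omega
    · omega
  exact chain_compare l hl _ p 0 hp h

/-! ### Existence: adding an `l`-edge -/

lemma add_edge (l : ℕ) (hl : 2 ≤ l) (nu : ℕ → ℕ) (hnu : IsPartition nu) (M : ℕ)
    (hM : ∀ j, j + l ≤ M → nu j ≠ nu (j + l - 1)) :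
    ∀ (b : ℕ) (t : ℕ → ℕ), IsPartition t → IsLRegular l t →
      removeLEdge l t = shiftP b nu → b ≤ M → b + plen t ≤ M + 1 →
      (1 ≤ b → t 0 ≤ nu (b - 1) + 1) →
      ∃ u, IsPartition u ∧ IsLRegular l u ∧ removeLEdge l u = nu ∧ plen u = b + plen t := by
  intro b
  induction b using Nat.strong_induction_on with
  | _ b ih =>
  intro t ht htr hrem hbM hbp htop
  by_cases hb : b = 0
  · subst hb
    exact ⟨t, ht, htr, hrem, by omega⟩
  have hex : ∃ i, nu i + (b - 1) < nu (b - 1) + l + i := ⟨b - 1, by omega⟩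
  classical
  obtain ⟨i, hi, himin⟩ : ∃ i, nu i + (b - 1) < nu (b - 1) + l + i ∧
      ∀ j, j < i → ¬ (nu j + (b - 1) < nu (b - 1) + l + j) :=
    ⟨Nat.find hex, Nat.find_spec hex, fun j hj => Nat.find_min hex hj⟩
  have hib : i ≤ b - 1 := by
    by_contra hc
    exact himin (b - 1) (by omega) (by omega)
  obtain ⟨h, rfl⟩ : ∃ h, b = i + h := ⟨b - i, by omega⟩
  have hib2 := hnu.1 i (i + h - 1) hib
  have htop' := htop (by omega)
  generalize hw : nu (i + h - 1) = w at *
  let u : ℕ → ℕ := fun k =>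
    if k = 0 then w + l + 1 - h else if k < h then nu (i + k - 1) + 1 else t (k - h)
  have u0 : u 0 = w + l + 1 - h := by simp [u]
  have u1 : ∀ k, 1 ≤ k → k < h → u k = nu (i + k - 1) + 1 := by
    intro k h1 h2
    simp only [u]
    rw [if_neg (by omega), if_pos h2]
  have u2 : ∀ k, u (k + h) = t k := by
    intro k
    simp only [u]
    rw [if_neg (by omega), if_neg (by omega)]
    congr 1
    omega
  have hbelow : ∀ k, k < h → w ≤ nu (i + k) := by
    intro k hk
    rw [← hw]
    exact hnu.1 _ _ (by omega)
  have huP : IsPartition u := by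
    constructor
    · intro a c hac
      apply antitone_nat_of_succ_le (f := u) _ hac
      intro n
      rcases Nat.lt_trichotomy (n + 1) h with h1 | h1 | h1
      · rw [u1 (n + 1) (by omega) h1]
        by_cases hn : n = 0
        · subst hn
          rw [u0, show i + (0 + 1) - 1 = i by omega]
          omega
        · rw [u1 n (by omega) (by omega)]
          have := hnu.1 (i + n - 1) (i + (n + 1) - 1) (by omega)
          omega
      · have e := u2 0
        rw [zero_add] at e
        rw [h1, e]
        by_cases hn : n = 0
        · subst hn
          rw [u0]
          omega
        · rw [u1 n (by omega) (by omega)]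
          have := hbelow (n - 1) (by omega)
          rw [show i + (n - 1) = i + n - 1 by omega] at this
          omega
      · have e1 := u2 (n - h)
        have e2 := u2 (n + 1 - h)
        rw [show n - h + h = n by omega] at e1
        rw [show n + 1 - h + h = n + 1 by omega] at e2
        rw [e1, e2]
        exact ht.1 _ _ (by omega)
    · obtain ⟨N, hN⟩ := ht.2
      refine ⟨N + h, fun k hk => ?_⟩
      have e1 := u2 (k - h)
      rw [show k - h + h = k by omega] at e1
      rw [e1]
      exact hN _ (by omega)
  have hul : plen u = h + plen t := by
    apply plen_eq huP
    intro k
    by_cases hk : h ≤ k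
    · have e1 := u2 (k - h)
      rw [show k - h + h = k by omega] at e1
      rw [e1, ← ple_iff ht]
      omega
    · by_cases hk0 : k = 0
      · subst hk0
        omega
      · rw [u1 k (by omega) (by omega)]
        omega
  have hfs : firstSeg l u = h := by
    apply fs_eq l hl
    · omega
    · have e := u2 0
      rw [zero_add] at e
      rw [u0, e]
      omega
    · intro j hj1 hj2
      rw [u0, u1 j hj1 hj2]
      have := hbelow (j - 1) (by omega)
      rw [show i + (j - 1) = i + j - 1 by omega] at this
      omega
  have hsh : shiftP h u = t := by
    funext k
    exact u2 k
  have hf : l < u 0 + plen u := by omega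
  have hurem : removeLEdge l u = shiftP i nu := by
    funext k
    rcases Nat.lt_trichotomy (k + 1) h with h1 | h1 | h1
    · rw [rem_full1 l hl huP hf k (by omega), u1 (k + 1) (by omega) h1]
      simp only [shiftP]
      rw [show i + (k + 1) - 1 = k + i by omega]
      omega
    · have := (rem_full2 l hl huP hf k (by omega)).1
      have e : shiftP i nu k = w := by
        simp only [shiftP]
        rw [← hw]
        congr 1
        omega
      omega
    · have e := rem_full3 l hl huP hf (k - h)
      rw [hfs, hsh, hrem] at e
      rw [show k - h + h = k by omega] at e
      rw [e]
      simp only [shiftP]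
      congr 1
      omega
  have hureg : IsLRegular l u := by
    intro j hj hjj
    by_cases hjh : h ≤ j
    · have e1 := u2 (j - h)
      have e2 := u2 (j + l - 1 - h)
      rw [show j - h + h = j by omega] at e1
      rw [show j + l - 1 - h + h = j + l - 1 by omega] at e2
      have := htr (j - h) (by omega)
      rw [show j - h + l - 1 = j + l - 1 - h by omega] at this
      omega
    have hall : ∀ k, j ≤ k → k ≤ j + l - 1 → u k = u j := by
      intro k h1 h2
      have := huP.1 j k h1
      have := huP.1 k (j + l - 1) h2
      omega
    by_cases hin : j + l - 1 < h
    · have hj0 : j = 0 := by omega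
      have hhl : h = l := by omega
      subst hj0
      have e1 := u1 (0 + l - 1) (by omega) hin
      have := hM i (by omega)
      have h3 := hnu.1 i (i + (0 + l - 1) - 1) (by omega)
      rw [show i + l - 1 = i + h - 1 by omega] at this
      have := hbelow (0 + l - 1 - 1) (by omega)
      rw [show i + (0 + l - 1 - 1) = i + (0 + l - 1) - 1 by omega] at this
      omega
    · have e0 := u2 0
      rw [zero_add] at e0
      have g0 := hall h (by omega) (by omega)
      have hh2 : 2 ≤ h := by
        by_contra hc
        have : j = 0 := by omega
        subst this
        omega
      have e1 := u1 (h - 1) (by omega) (by omega)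
      have g1 := hall (h - 1) (by omega) (by omega)
      have b1 := hbelow (h - 2) (by omega)
      rw [show i + (h - 2) = i + (h - 1) - 1 by omega] at b1
      have hj0 : 1 ≤ j := by
        by_contra hc
        have : j = 0 := by omega
        subst this
        omega
      have e2 := u1 j hj0 (by omega)
      have hlast := u2 (j + l - 1 - h)
      rw [show j + l - 1 - h + h = j + l - 1 by omega] at hlast
      have hpl := mt (ple_iff huP (j + l - 1)).1 (by omega)
      have hM' := hM (i + j - 1) (by omega)
      apply hM'
      rw [show i + j - 1 + l - 1 = i + j + l - 2 by omega]
      by_cases hm : j + l - 1 = h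
      · rw [show i + j + l - 2 = i + h - 1 by omega, hw]
        omega
      · have lb := (rem_bounds l hl t ht (j + l - 2 - h)).2
        rw [hrem] at lb
        have ee : shiftP (i + h) nu (j + l - 2 - h) = nu (i + j + l - 2) := by
          simp only [shiftP]
          congr 1
          omega
        rw [show j + l - 2 - h + 1 = j + l - 1 - h by omega] at lb
        have := hnu.1 (i + j - 1) (i + j + l - 2) (by omega)
        omega
  obtain ⟨x, hx1, hx2, hx3, hx4⟩ := ih i (by omega) u huP hureg hurem (by omega) (by omega) (by
    intro hi1
    have := himin (i - 1) (by omega)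
    omega)
  exact ⟨x, hx1, hx2, hx3, by omega⟩

lemma exists_mull (l : ℕ) (hl : 2 ≤ l) (nu : ℕ → ℕ) (hnu : IsPartition nu) (hr : IsLRegular l nu)
    (s : ℕ) (hs : 1 ≤ s) (h1 : plen nu ≤ s) (h2 : s ≤ plen nu + l) :
    ∃ u, IsPartition u ∧ IsLRegular l u ∧ removeLEdge l u = nu ∧ plen u = s := by
  by_cases he : s = plen nu
  · have hz : IsPartition (fun _ => 0) := ⟨fun _ _ _ => le_rfl, 0, fun _ _ => rfl⟩
    have hzl : plen (fun _ => 0) = 0 := by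
      apply plen_eq hz
      simp
    obtain ⟨u, a, b, c, d⟩ := add_edge l hl nu hnu s
      (by
        intro j hj h
        refine hr j ?_ h.symm
        intro h0
        have := (ple_iff hnu j).2 h0
        omega)
      s (fun _ => 0) hz (fun i hi => absurd rfl hi)
      (by
        funext i
        rw [rem_zero l hz rfl]
        exact ((ple_iff hnu (i + s)).1 (by omega)).symm)
      le_rfl (by omega) (fun _ => by omega)
    exact ⟨u, a, b, c, by omega⟩
  · let t : ℕ → ℕ := fun i => if i = 0 then 1 else 0
    have ht : IsPartition t := by
      refine ⟨fun i j h => ?_, 1, fun i hi => ?_⟩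
      · simp only [t]
        split_ifs <;> omega
      · simp only [t]
        rw [if_neg (by omega)]
    have htl : plen t = 1 := by
      apply plen_eq ht
      intro i
      simp only [t]
      split_ifs with hi0
      · simp [hi0]
      · simp
        omega
    have t0 : t 0 = 1 := rfl
    obtain ⟨u, a, b, c, d⟩ := add_edge l hl nu hnu (s - 1)
      (by
        intro j hj h
        by_cases h0 : nu j = 0
        · have := (ple_iff hnu j).2 h0
          omega
        · exact hr j h0 h.symm)
      (s - 1) t ht
      (by
        intro i hi h
        simp only [t] at hi h
        split_ifs at hi h <;> omega)
      (by
        funext i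
        rw [rem_partial l hl ht (by omega)]
        have e1 : t (i + 1) = 0 := by simp [t]
        have e2 : shiftP (s - 1) nu i = 0 := (ple_iff hnu (i + (s - 1))).1 (by omega)
        rw [e1, e2])
      le_rfl (by omega) (fun _ => by rw [t0]; omega)
    exact ⟨u, a, b, c, by omega⟩

lemma pdeg_rem_lt (l : ℕ) (hl : 2 ≤ l) (p : ℕ → ℕ) (hp : IsPartition p) (h0 : p 0 ≠ 0) :
    pdeg (removeLEdge l p) < pdeg p := by
  have h1 := elen_ge l hl p hp
  have h2 := ple_iff hp 0
  unfold elen at h1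
  omega

lemma mullAux_spec (l : ℕ) (hl : 2 ≤ l) : ∀ (n : ℕ) (p : ℕ → ℕ), IsPartition p → IsLRegular l p →
    pdeg p ≤ n → IsPartition (mullAux l n p) ∧ IsLRegular l (mullAux l n p) ∧
      plen (mullAux l n p) = mullLen l p := by
  have hz : IsPartition (fun _ => 0) := ⟨fun _ _ _ => le_rfl, 0, fun _ _ => rfl⟩
  have hzl : plen (fun _ => 0) = 0 := by
    apply plen_eq hz
    simp
  have zero : ∀ p, IsPartition p → p 0 = 0 → mullLen l p = 0 := by
    intro p hp h0
    simp [mullLen, elen_zero l hp h0]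
  intro n
  induction n with
  | zero =>
    intro p hp hr hn
    have h0 : p 0 = 0 := by
      by_contra h0
      have := pdeg_rem_lt l hl p hp h0
      omega
    refine ⟨hz, fun i hi => absurd rfl hi, ?_⟩
    rw [zero p hp h0]
    exact hzl
  | succ n ih =>
    intro p hp hr hn
    by_cases h0 : p 0 = 0
    · have e : mullAux l (n + 1) p = fun _ => 0 := by simp [mullAux, h0]
      rw [e, zero p hp h0]
      exact ⟨hz, fun i hi => absurd rfl hi, hzl⟩
    · have hlt := pdeg_rem_lt l hl p hp h0
      obtain ⟨a, b, c⟩ := ih _ (rem_isP l hl p hp) (rem_reg l hl p hp hr) (by omega)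
      obtain ⟨d, e⟩ := mullLen_compare l hl p hp
      have hex := exists_mull l hl _ a b (mullLen l p) (mullLen_pos l hl p hp h0 hr)
        (by omega) (by omega)
      have hsp := Classical.epsilon_spec hex
      have e : mullAux l (n + 1) p = Classical.epsilon fun μ : ℕ → ℕ =>
        IsPartition μ ∧ IsLRegular l μ ∧
          removeLEdge l μ = mullAux l n (removeLEdge l p) ∧ plen μ = mullLen l p := by
        conv_lhs => unfold mullAux
        rw [if_neg h0]
      rw [e]
      exact ⟨hsp.1, hsp.2.1, hsp.2.2.2⟩

/-! ### Removing the first column -/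

lemma tilde_isP {p : ℕ → ℕ} (hp : IsPartition p) : IsPartition (fun i => p i - 1) := by
  refine ⟨fun i j h => ?_, ?_⟩
  · have := hp.1 i j h
    show p j - 1 ≤ p i - 1
    omega
  · obtain ⟨N, hN⟩ := hp.2
    refine ⟨N, fun i hi => ?_⟩
    have := hN i hi
    show p i - 1 = 0
    omega

lemma tilde_chain (l : ℕ) (hl : 2 ≤ l) (p : ℕ → ℕ) (hp : IsPartition p) :
    p 0 ≠ 0 → IsLRegular l p → l ∣ elen l p →
    2 ≤ p 0 ∧ ∀ n, plen p ≤ n → chainS l n (fun i => p i - 1) = chainS l n p := by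
  revert p
  apply seg_ind l hl
  · intro p hp hf h0 _ hd
    rw [elen_partial l hl hp hf h0] at hd
    have := ple_iff hp 0
    have := Nat.le_of_dvd (by omega) hd
    omega
  · intro p hp hf ih h0 hr hd
    have hq := isP_shift hp (firstSeg l p)
    have hs := fs_spec l hl p
    have hsl := fs_le_l l hl p
    have hsp := fs_le_plen l hl hp hf
    have hql := plen_shift hp (firstSeg l p)
    have he := elen_full l hl hp hf
    have hph := hp.1 0 (firstSeg l p) (by omega)
    have hT := tilde_isP hp
    have hq0 : shiftP (firstSeg l p) p 0 = p (firstSeg l p) := by simp [shiftP]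
    have hpos : ∀ k, k < firstSeg l p → p k ≠ 0 := fun k hk => mt (ple_iff hp k).2 (by omega)
    have hlt := fs_lt l p
    by_cases hqz : p (firstSeg l p) = 0
    · have hpl : plen p = firstSeg l p := by
        have := (ple_iff hp (firstSeg l p)).2 hqz
        omega
      have h2 : 2 ≤ p 0 := by
        by_contra hc
        have h3 := hr 0 h0
        rw [show 0 + l - 1 = l - 1 by omega] at h3
        have := hpos (l - 1) (by omega)
        have := hp.1 0 (l - 1) (by omega)
        omega
      refine ⟨h2, ?_⟩
      intro n hn
      obtain ⟨m, rfl⟩ : ∃ m, n = m + 1 := ⟨n - 1, by omega⟩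
      have e1 : chainS l (m + 1) p = l - firstSeg l p := by
        simp only [chainS]
        rw [chainS_partial l hl _ _ hq (by omega)]
        omega
      rw [e1]
      by_cases hc : p 0 + plen p = l + 1
      · have hle := plen_mono hT hp (fun i => Nat.sub_le _ _)
        rw [chainS_partial l hl _ _ hT (by
          show p 0 - 1 + _ ≤ l
          omega)]
        show p 0 - 1 = _
        omega
      · have hfs : firstSeg l (fun i => p i - 1) = firstSeg l p := by
          apply fs_eq l hl
          · exact hs.1
          · omega
          · intro j hj1 hj2
            have := hlt j hj1 hj2
            have := hpos j hj2
            omega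
        simp only [chainS]
        rw [hfs]
        have hTq := isP_shift hT (firstSeg l p)
        have hTql := plen_shift hT (firstSeg l p)
        have hTz : shiftP (firstSeg l p) (fun i => p i - 1) 0 = 0 := by
          show p (0 + firstSeg l p) - 1 = 0
          rw [zero_add, hqz]
        have := (ple_iff hTq 0).2 hTz
        rw [chainS_partial l hl _ _ hTq (by omega), hTz]
        omega
    · obtain ⟨i1, i2⟩ := ih (by omega) (reg_shift hr hl _) (by
        rw [he] at hd
        simpa using hd)
      refine ⟨by omega, ?_⟩
      intro n hn
      obtain ⟨m, rfl⟩ : ∃ m, n = m + 1 := ⟨n - 1, by omega⟩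
      have hfs : firstSeg l (fun i => p i - 1) = firstSeg l p := by
        apply fs_eq l hl
        · exact hs.1
        · omega
        · intro j hj1 hj2
          have := hlt j hj1 hj2
          have := hpos j hj2
          omega
      simp only [chainS]
      rw [hfs]
      have := i2 m (by omega)
      rw [← this]

/-- Let `λ` be a nonzero `l`-regular, edge `l`-connected partition with `l ∣ e_l(λ)`, and
let `λ̃` be obtained by removing the first column of `λ`. Then `λ̃` is `l`-regular and
`ℓ(Mull(λ)) = ℓ(Mull(λ̃))`. -/
theorem mull_plen_remove_first_column (l : ℕ) (hl : 2 ≤ l) (p : ℕ → ℕ)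
    (hp : IsPartition p) (hne : p 0 ≠ 0) (hreg : IsLRegular l p)
    (hconn : EdgeLConnected l p) (hdvd : l ∣ elen l p) :
    IsLRegular l (fun i => p i - 1) ∧
      plen (mull l p) = plen (mull l fun i => p i - 1) := by
  have hT := tilde_isP hp
  have hregT : IsLRegular l (fun i => p i - 1) := by
    intro i hi h
    have hi' : p i - 1 ≠ 0 := hi
    have h' : p (i + l - 1) - 1 = p i - 1 := h
    have := hreg i (by omega)
    omega
  refine ⟨hregT, ?_⟩
  unfold mull
  rw [(mullAux_spec l hl _ p hp hreg le_rfl).2.2, (mullAux_spec l hl _ _ hT hregT le_rfl).2.2]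
  have hle := plen_mono hT hp (fun i => Nat.sub_le _ _)
  rw [mullLen_chain l hl (plen p) p hp le_rfl, mullLen_chain l hl (plen p) _ hT hle]
  exact ((tilde_chain l hl p hp hne hreg hdvd).2 _ le_rfl).symm
end
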